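/- arXiv:1704.06870 — 4 statements merged into one kernel-verified Lean document; each statement's English description precedes it below -/
import Mathlib

section
/- Order-preserving property for line-constrained barrier coverage: let x_1 ≤ x_2 ≤ ⋯ ≤ x_n be real numbers (initial sensor positions on the line), r > 0, and let [a_1,b_1],…,[a_m,b_m] be pairwise disjoint closed intervals with a_k < b_k (the barriers). If for some λ ≥ 0 there exist real numbers y_1,…,y_n with |y_i − x_i| ≤ λ for every i such that every point p with a_k ≤ p ≤ b_k for some k satisfies |p − y_i| ≤ r for some i, then there also exist real numbers z_1 ≤ z_2 ≤ ⋯ ≤ z_n with |z_i − x_i| ≤ λ for every i such that every such barrier point p satisfies |p − z_i| ≤ r for some i. -/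
/-!
Sorting the assignment works: take `z` to be `y` rearranged in increasing order. The set of
chosen positions is unchanged, so coverage is preserved. For the displacement bound, a
permutation `σ` of `Fin n` cannot map the `n - i` indices `j ≥ i` injectively into the
`n - i - 1` indices `> i`, so some `j ≥ i` has `σ j ≤ i`, whence
`z i ≤ z j = y (σ j) ≤ x (σ j) + λ ≤ x i + λ`; the lower bound is symmetric.
-/

theorem perm_exists_ge_le {n : ℕ} (σ : Equiv.Perm (Fin n)) (i : Fin n) :
    ∃ j, i ≤ j ∧ σ j ≤ i := by
  by_contra! h
  have hc : (Finset.Ici i).card ≤ (Finset.Ioi i).card :=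
    Finset.card_le_card_of_injOn σ (fun j hj => by
      simpa using h j (by simpa using hj)) σ.injective.injOn
  rw [Fin.card_Ici, Fin.card_Ioi] at hc
  omega

theorem perm_exists_le_ge {n : ℕ} (σ : Equiv.Perm (Fin n)) (i : Fin n) :
    ∃ j, j ≤ i ∧ i ≤ σ j := by
  obtain ⟨j, hj, hσ⟩ := perm_exists_ge_le σ.symm i
  exact ⟨σ.symm j, hσ, by simpa using hj⟩

/-- Order-preserving property for line-constrained barrier coverage. -/
theorem order_preserving_coverage (n m : ℕ) (r lam : ℝ) (hr : 0 < r) (hlam : 0 ≤ lam)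
    (x : Fin n → ℝ) (hx : Monotone x)
    (a b : Fin m → ℝ) (hab : ∀ k, a k < b k)
    (hdisj : ∀ k l : Fin m, k ≠ l → Disjoint (Set.Icc (a k) (b k)) (Set.Icc (a l) (b l)))
    (y : Fin n → ℝ) (hy : ∀ i, |y i - x i| ≤ lam)
    (hcov : ∀ k : Fin m, ∀ p : ℝ, a k ≤ p → p ≤ b k → ∃ i, |p - y i| ≤ r) :
    ∃ z : Fin n → ℝ, Monotone z ∧ (∀ i, |z i - x i| ≤ lam) ∧
      ∀ k : Fin m, ∀ p : ℝ, a k ≤ p → p ≤ b k → ∃ i, |p - z i| ≤ r := by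
  have hmono : Monotone (y ∘ Tuple.sort y) := Tuple.monotone_sort y
  refine ⟨y ∘ Tuple.sort y, hmono, fun i => ?_, fun k p hap hpb => ?_⟩
  · obtain ⟨j, hij, hj⟩ := perm_exists_ge_le (Tuple.sort y) i
    obtain ⟨l, hli, hl⟩ := perm_exists_le_ge (Tuple.sort y) i
    have h1 := hmono hij
    have h2 := hmono hli
    have h3 := abs_le.1 (hy (Tuple.sort y j))
    have h4 := abs_le.1 (hy (Tuple.sort y l))
    have h5 := hx hj
    have h6 := hx hl
    simp only [Function.comp_apply] at h1 h2 ⊢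
    exact abs_le.2 ⟨by linarith, by linarith⟩
  · obtain ⟨i, hi⟩ := hcov k p hap hpb
    exact ⟨(Tuple.sort y).symm i, by simpa using hi⟩
end

section
/- Structure of an optimal order-preserving solution (Lemma 2): let x_1 ≤ ⋯ ≤ x_n be sensor positions, r > 0 the common range, and [a_1,b_1],…,[a_m,b_m] the barriers (pairwise disjoint closed intervals with a_k < b_k). Suppose λ* > 0 is feasible and no λ with 0 ≤ λ < λ* is feasible. Then there exist a nondecreasing covering assignment y_1 ≤ ⋯ ≤ y_n with |y_i − x_i| ≤ λ* for all i, and indices 1 ≤ i ≤ j ≤ n, such that y_{t+1} = y_t + 2r for every t with i ≤ t < j (the sensors s_i,…,s_j are in attached positions), and one of the following holds: (a) y_j = x_j − λ* and y_i = a_k + r for some k ∈ {1,…,m}; (b) y_i = x_i + λ* and y_j = b_k − r for some k ∈ {1,…,m}; (c) y_i = x_i + λ* and y_j = x_j − λ*. -/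
/-!
Any monotone covering assignment `y` with `|y i - x i| ≤ lamStar` has the required structure; one is
obtained by sorting the targets of a feasible assignment (`sort_abs_sub_le`).

Call `j` left-tight if `y j = x j - lamStar` and right-tight if `y i = x i + lamStar`. Let `A` be the
set of all sensors from which an attached chain leads up to a left-tight sensor, and `B` the set of
all sensors to which an attached chain leads from a right-tight one. Alternative (c) says that `A`
and `B` meet; (a) says that the covering interval of some member of `A` starts at a left endpoint of
a barrier; (b) says that the covering interval of some member of `B` ends at a right endpoint. If all
three fail, move `A` to the right by a small `ε` and `B` to the left by `ε`. Every displacement is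
then at most `lamStar - ε`, and the barriers stay covered (`covered_of_uncovered_left` and its mirror
image `covered_of_uncovered_right`): a barrier point lost at the left end of a member of `A` has
barrier points immediately to its left, so the preceding sensor either overlaps, which leaves room
for a small shift, or is attached and moves along. This contradicts the minimality of `lamStar`.
-/

open Filter Topology in
/-- For small `ε > 0`, every positive member of a finite family of reals is at least `4 * ε`. -/
theorem eventually_gap {ι : Type*} [Finite ι] (f : ι → ℝ) :
    ∀ᶠ ε in 𝓝[>] (0 : ℝ), ∀ i, 0 < f i → 4 * ε ≤ f i := by
  rw [eventually_all]
  intro i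
  by_cases h : 0 < f i
  · have h4 : (0 : ℝ) < f i / 4 := by positivity
    filter_upwards [Ioo_mem_nhdsGT h4] with ε hε _
    linarith [hε.2]
  · exact Eventually.of_forall fun ε h' => absurd h' h

/-- If `y` is within `lam` of the monotone tuple `x`, then so is the sorted rearrangement of `y`. -/
theorem sort_abs_sub_le {n : ℕ} {x y : Fin n → ℝ} {lam : ℝ} (hx : Monotone x)
    (h : ∀ i, |y i - x i| ≤ lam) (i : Fin n) : |y (Tuple.sort y i) - x i| ≤ lam := by
  have hm : Monotone (y ∘ Tuple.sort y) := Tuple.monotone_sort y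
  have h' : ∀ j, y j - x j ≤ lam ∧ x j - y j ≤ lam := fun j =>
    ⟨(abs_le.1 (h j)).2, by linarith [(abs_le.1 (h j)).1]⟩
  rw [abs_le]
  -- If a bound fails at `i`, the sorting permutation maps the indices on one closed side of `i`
  -- into the open side, which has fewer elements.
  constructor
  · by_contra! hc
    have hsub : (Finset.Iic i).image (Tuple.sort y) ⊆ Finset.Iio i := by
      intro k hk
      obtain ⟨j, hj, rfl⟩ := Finset.mem_image.1 hk
      have h1 := hm (Finset.mem_Iic.1 hj)
      simp only [Function.comp_apply] at h1
      rw [Finset.mem_Iio]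
      by_contra! h2
      linarith [hx h2, h' (Tuple.sort y j)]
    have := Finset.card_le_card hsub
    rw [Finset.card_image_of_injective _ (Tuple.sort y).injective, Fin.card_Iic,
      Fin.card_Iio] at this
    omega
  · by_contra! hc
    have hsub : (Finset.Ici i).image (Tuple.sort y) ⊆ Finset.Ioi i := by
      intro k hk
      obtain ⟨j, hj, rfl⟩ := Finset.mem_image.1 hk
      have h1 := hm (Finset.mem_Ici.1 hj)
      simp only [Function.comp_apply] at h1
      rw [Finset.mem_Ioi]
      by_contra! h2
      linarith [hx h2, h' (Tuple.sort y j)]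
    have := Finset.card_le_card hsub
    rw [Finset.card_image_of_injective _ (Tuple.sort y).injective, Fin.card_Ici,
      Fin.card_Ioi] at this
    omega

/-- Let `y` cover the barrier `[a, b]`, and let `y'` arise from `y` by moving the sensors in `A` to
the right by `ε` and the others to the left by at most `ε`. If `A` contains the predecessor of each
of its members to which that predecessor is attached, if no covering interval of a member of `A`
starts at `a`, and if `ε` is small compared with all gaps between the relevant positions, then a
barrier point that `i ∈ A` loses at its left end is covered by some sensor of `y'`. -/
theorem covered_of_uncovered_left {n : ℕ} {r ε a b : ℝ} {y y' : Fin n → ℝ} {A : Fin n → Prop}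
    (hy : Monotone y) (hε : 0 < ε) (hεr : 4 * ε ≤ r)
    (hA : ∀ t, A t → y' t = y t + ε)
    (hA' : ∀ t, ¬ A t → y t - ε ≤ y' t ∧ y' t ≤ y t)
    (hclosed : ∀ s t : Fin n, (s : ℕ) + 1 = t → A t → y t = y s + 2 * r → A s)
    (hgap : ∀ s t, y s < y t → 4 * ε ≤ y t - y s)
    (hgap1 : ∀ s t, y s + 2 * r < y t → 4 * ε ≤ y t - (y s + 2 * r))
    (hgap2 : ∀ s t, y t < y s + 2 * r → 4 * ε ≤ y s + 2 * r - y t)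
    (hcov : ∀ p, a ≤ p → p ≤ b → ∃ i, |p - y i| ≤ r)
    (hne : ∀ t, A t → y t - r ≠ a)
    (hgapa : ∀ t, y t - r < a → 4 * ε ≤ a - (y t - r))
    (hgapa' : ∀ t, a < y t - r → 4 * ε ≤ y t - r - a)
    {p : ℝ} (hpa : a ≤ p) (hpb : p ≤ b) {i : Fin n} (hi : A i)
    (hpi : |p - y i| ≤ r) (hlost : p < y' i - r) : ∃ l, |p - y' l| ≤ r := by
  classical
  rw [abs_le] at hpi
  have h1 := hA i hi
  -- The least index at the same position: only its predecessor is strictly to the left.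
  obtain ⟨i₀, hi₀, hmin⟩ : ∃ i₀, y i₀ = y i ∧ ∀ k, y k = y i → i₀ ≤ k := by
    have hn : (Finset.univ.filter fun k => y k = y i).Nonempty := ⟨i, by simp⟩
    refine ⟨_, (Finset.mem_filter.1 (Finset.min'_mem _ hn)).2, fun k hk => ?_⟩
    exact Finset.min'_le _ _ (by simp [hk])
  by_cases hA0 : A i₀
  swap
  · refine ⟨i₀, abs_le.2 ?_⟩
    have := hA' i₀ hA0
    constructor <;> linarith
  have hlt : a < y i - r := by
    rcases lt_trichotomy (y i - r) a with h | h | h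
    · linarith [hgapa i h]
    · exact absurd h (hne i hi)
    · exact h
  have h2 := hgapa' i hlt
  obtain ⟨l, hl⟩ := hcov (y i - r - 2 * ε) (by linarith) (by linarith)
  rw [abs_le] at hl
  have hll : l < i₀ := by
    by_contra! h
    linarith [hy h]
  have hl2 : y i ≤ y l + 2 * r := by
    by_contra! h
    linarith [hgap1 l i h]
  have hpos : 0 < (i₀ : ℕ) := lt_of_le_of_lt (Nat.zero_le _) hll
  obtain ⟨s, hs⟩ : ∃ s : Fin n, (s : ℕ) + 1 = i₀ := ⟨⟨i₀ - 1, by omega⟩, by simp; omega⟩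
  have hls : y l ≤ y s := hy (Fin.le_def.2 (by have := Fin.lt_def.1 hll; omega))
  have hsi : y s < y i := by
    refine lt_of_le_of_ne (hi₀ ▸ hy (Fin.le_def.2 (by omega))) fun h => ?_
    have := Fin.le_def.1 (hmin s h)
    omega
  have h3 := hgap s i hsi
  refine ⟨s, abs_le.2 ?_⟩
  rcases eq_or_lt_of_le (show y i ≤ y s + 2 * r by linarith) with h | h
  · have := hA s (hclosed s i₀ hs hA0 (by linarith))
    constructor <;> linarith
  · have h4 := hgap2 s i h
    by_cases hAs : A s
    · have := hA s hAs
      constructor <;> linarith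
    · have := hA' s hAs
      constructor <;> linarith

/-- Mirror image of `covered_of_uncovered_left`: the sensors in `B` move to the left. -/
theorem covered_of_uncovered_right {n : ℕ} {r ε a b : ℝ} {y y' : Fin n → ℝ} {B : Fin n → Prop}
    (hy : Monotone y) (hε : 0 < ε) (hεr : 4 * ε ≤ r)
    (hB : ∀ t, B t → y' t = y t - ε)
    (hB' : ∀ t, ¬ B t → y t ≤ y' t ∧ y' t ≤ y t + ε)
    (hclosed : ∀ s t : Fin n, (s : ℕ) + 1 = t → B s → y t = y s + 2 * r → B t)
    (hgap : ∀ s t, y s < y t → 4 * ε ≤ y t - y s)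
    (hgap1 : ∀ s t, y s + 2 * r < y t → 4 * ε ≤ y t - (y s + 2 * r))
    (hgap2 : ∀ s t, y t < y s + 2 * r → 4 * ε ≤ y s + 2 * r - y t)
    (hcov : ∀ p, a ≤ p → p ≤ b → ∃ i, |p - y i| ≤ r)
    (hne : ∀ t, B t → y t + r ≠ b)
    (hgapb : ∀ t, b < y t + r → 4 * ε ≤ y t + r - b)
    (hgapb' : ∀ t, y t + r < b → 4 * ε ≤ b - (y t + r))
    {p : ℝ} (hpa : a ≤ p) (hpb : p ≤ b) {i : Fin n} (hi : B i)
    (hpi : |p - y i| ≤ r) (hlost : y' i + r < p) : ∃ l, |p - y' l| ≤ r := by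
  have key : ∀ u v : ℝ, |-u - -v| = |u - v| := fun u v => by rw [← abs_neg]; congr 1; ring
  obtain ⟨l, hl⟩ := covered_of_uncovered_left (r := r) (ε := ε) (a := -b) (b := -a)
    (y := fun t => -y t.rev) (y' := fun t => -y' t.rev) (A := fun t => B t.rev) (p := -p)
    (i := i.rev)
    (fun s t hst => neg_le_neg (hy (Fin.rev_le_rev.2 hst))) hε hεr
    (fun t ht => by linarith [hB _ ht])
    (fun t ht => by constructor <;> linarith [hB' _ ht])
    (fun s t hst ht h => by
      refine hclosed t.rev s.rev ?_ ht (by linarith)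
      simp only [Fin.val_rev]; omega)
    (fun s t h => by linarith [hgap t.rev s.rev (by linarith)])
    (fun s t h => by linarith [hgap1 t.rev s.rev (by linarith)])
    (fun s t h => by linarith [hgap2 t.rev s.rev (by linarith)])
    (fun q hq hq' => by
      obtain ⟨j, hj⟩ := hcov (-q) (by linarith) (by linarith)
      exact ⟨j.rev, by rw [← key] at hj; simpa using hj⟩)
    (fun t ht h => hne _ ht (by linarith))
    (fun t h => by linarith [hgapb t.rev (by linarith)])
    (fun t h => by linarith [hgapb' t.rev (by linarith)])
    (by linarith) (by linarith) (by simpa using hi)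
    (by simpa only [Fin.rev_rev, key] using hpi)
    (by simp only [Fin.rev_rev]; linarith)
  exact ⟨l.rev, by simpa only [key] using hl⟩

/-- The sensors `i, …, j` are in attached positions. No condition is imposed when `j ≤ i`. -/
def Attached {n : ℕ} (r : ℝ) (y : Fin n → ℝ) (i j : Fin n) : Prop :=
  ∀ s t : Fin n, (s : ℕ) + 1 = t → i ≤ s → t ≤ j → y t = y s + 2 * r

theorem attached_refl {n : ℕ} (r : ℝ) (y : Fin n → ℝ) (i : Fin n) : Attached r y i i := by
  intro s t hst his hti
  rw [Fin.le_def] at his hti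
  omega

theorem Attached.trans {n : ℕ} {r : ℝ} {y : Fin n → ℝ} {i j k : Fin n}
    (h1 : Attached r y i j) (h2 : Attached r y j k) : Attached r y i k := by
  intro s t hst his htk
  rcases le_or_gt t j with h | h
  · exact h1 s t hst his h
  · refine h2 s t hst (Fin.le_def.2 ?_) htk
    rw [Fin.lt_def] at h
    omega

theorem attached_succ {n : ℕ} {r : ℝ} {y : Fin n → ℝ} {s t : Fin n} (hst : (s : ℕ) + 1 = t)
    (h : y t = y s + 2 * r) : Attached r y s t := by
  intro u v huv hsu hvt
  rw [Fin.le_def] at hsu hvt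
  obtain rfl : u = s := Fin.ext (by omega)
  obtain rfl : v = t := Fin.ext (by omega)
  exact h

/-- Structure of an optimal order-preserving solution (Lemma 2). -/
theorem optimal_solution_structure (n m : ℕ) (r lamStar : ℝ) (hr : 0 < r)
    (hpos : 0 < lamStar)
    (x : Fin n → ℝ) (hx : Monotone x)
    (a b : Fin m → ℝ) (hab : ∀ k, a k < b k)
    (hdisj : ∀ k l : Fin m, k ≠ l → Disjoint (Set.Icc (a k) (b k)) (Set.Icc (a l) (b l)))
    (hfeas : ∃ y : Fin n → ℝ, (∀ i, |y i - x i| ≤ lamStar) ∧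
      ∀ k : Fin m, ∀ p : ℝ, a k ≤ p → p ≤ b k → ∃ i, |p - y i| ≤ r)
    (hmin : ∀ lam : ℝ, 0 ≤ lam → lam < lamStar →
      ¬ ∃ y : Fin n → ℝ, (∀ i, |y i - x i| ≤ lam) ∧
        ∀ k : Fin m, ∀ p : ℝ, a k ≤ p → p ≤ b k → ∃ i, |p - y i| ≤ r) :
    ∃ y : Fin n → ℝ, Monotone y ∧ (∀ i, |y i - x i| ≤ lamStar) ∧
      (∀ k : Fin m, ∀ p : ℝ, a k ≤ p → p ≤ b k → ∃ i, |p - y i| ≤ r) ∧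
      ∃ i j : Fin n, i ≤ j ∧
        (∀ t : ℕ, ∀ (_ : (i : ℕ) ≤ t) (h2 : t < (j : ℕ)),
          y ⟨t + 1, by omega⟩ = y ⟨t, by omega⟩ + 2 * r) ∧
        ((y j = x j - lamStar ∧ ∃ k : Fin m, y i = a k + r) ∨
         (y i = x i + lamStar ∧ ∃ k : Fin m, y j = b k - r) ∨
         (y i = x i + lamStar ∧ y j = x j - lamStar)) := by
  classical
  obtain ⟨y₀, hy₀, hcov₀⟩ := hfeas
  obtain ⟨y, hy, hd, hcov⟩ : ∃ y : Fin n → ℝ, Monotone y ∧ (∀ i, |y i - x i| ≤ lamStar) ∧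
      ∀ k : Fin m, ∀ p : ℝ, a k ≤ p → p ≤ b k → ∃ i, |p - y i| ≤ r := by
    refine ⟨y₀ ∘ Tuple.sort y₀, Tuple.monotone_sort y₀, sort_abs_sub_le hx hy₀, ?_⟩
    intro k p h1 h2
    obtain ⟨i, hi⟩ := hcov₀ k p h1 h2
    exact ⟨(Tuple.sort y₀).symm i, by simpa using hi⟩
  refine ⟨y, hy, hd, hcov, ?_⟩
  suffices hs : ∃ i j : Fin n, i ≤ j ∧ Attached r y i j ∧
      ((y j = x j - lamStar ∧ ∃ k : Fin m, y i = a k + r) ∨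
       (y i = x i + lamStar ∧ ∃ k : Fin m, y j = b k - r) ∨
       (y i = x i + lamStar ∧ y j = x j - lamStar)) by
    obtain ⟨i, j, hij, hatt, h⟩ := hs
    exact ⟨i, j, hij, fun t hit htj => hatt _ _ rfl (Fin.le_def.2 hit) (Fin.le_def.2 htj), h⟩
  by_contra hno
  let A : Fin n → Prop := fun t => ∃ j, t ≤ j ∧ Attached r y t j ∧ y j = x j - lamStar
  let B : Fin n → Prop := fun t => ∃ i, i ≤ t ∧ Attached r y i t ∧ y i = x i + lamStar
  have hdis : ∀ t, A t → ¬ B t := by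
    rintro t ⟨j, htj, h1, h2⟩ ⟨i, hit, h3, h4⟩
    exact hno ⟨i, j, hit.trans htj, h3.trans h1, Or.inr (Or.inr ⟨h4, h2⟩)⟩
  have hAne : ∀ k t, A t → y t - r ≠ a k := by
    rintro k t ⟨j, htj, h1, h2⟩ h
    exact hno ⟨t, j, htj, h1, Or.inl ⟨h2, k, by linarith⟩⟩
  have hBne : ∀ k t, B t → y t + r ≠ b k := by
    rintro k t ⟨i, hit, h1, h2⟩ h
    exact hno ⟨i, t, hit, h1, Or.inr (Or.inl ⟨h2, k, by linarith⟩)⟩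
  have hAcl : ∀ s t : Fin n, (s : ℕ) + 1 = t → A t → y t = y s + 2 * r → A s := by
    rintro s t hst ⟨j, htj, h1, h2⟩ h
    exact ⟨j, le_trans (Fin.le_def.2 (by omega)) htj, (attached_succ hst h).trans h1, h2⟩
  have hBcl : ∀ s t : Fin n, (s : ℕ) + 1 = t → B s → y t = y s + 2 * r → B t := by
    rintro s t hst ⟨i, his, h1, h2⟩ h
    exact ⟨i, his.trans (Fin.le_def.2 (by omega)), h1.trans (attached_succ hst h), h2⟩
  obtain ⟨ε, hε, hεr, hεl, g0, g1, g2, ga, ga', gb, gb', gL, gR⟩ :=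
    ((eventually_mem_nhdsWithin (a := (0 : ℝ)) (s := Set.Ioi 0)).and <|
      (eventually_gap fun _ : Unit => r).and <|
      (eventually_gap fun _ : Unit => lamStar).and <|
      (eventually_gap fun q : Fin n × Fin n => y q.2 - y q.1).and <|
      (eventually_gap fun q : Fin n × Fin n => y q.2 - (y q.1 + 2 * r)).and <|
      (eventually_gap fun q : Fin n × Fin n => y q.1 + 2 * r - y q.2).and <|
      (eventually_gap fun q : Fin m × Fin n => a q.1 - (y q.2 - r)).and <|
      (eventually_gap fun q : Fin m × Fin n => y q.2 - r - a q.1).and <|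
      (eventually_gap fun q : Fin m × Fin n => y q.2 + r - b q.1).and <|
      (eventually_gap fun q : Fin m × Fin n => b q.1 - (y q.2 + r)).and <|
      (eventually_gap fun i => y i - (x i - lamStar)).and
      (eventually_gap fun i => x i + lamStar - y i)).exists
  have hε0 : 0 < ε := hε
  have hεr := hεr () hr
  have hεl := hεl () hpos
  let y' : Fin n → ℝ := fun t => if A t then y t + ε else if B t then y t - ε else y t
  have hyA : ∀ t, A t → y' t = y t + ε := fun t h => if_pos h
  have hyB : ∀ t, B t → y' t = y t - ε := fun t h => by
    have : ¬ A t := fun h' => hdis t h' h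
    simp only [y', if_neg this, if_pos h]
  have hyN : ∀ t, ¬ A t → ¬ B t → y' t = y t := fun t h h' => by
    simp only [y', if_neg h, if_neg h']
  have hyA' : ∀ t, ¬ A t → y t - ε ≤ y' t ∧ y' t ≤ y t := fun t h => by
    by_cases h' : B t
    · rw [hyB t h']; constructor <;> linarith
    · rw [hyN t h h']; constructor <;> linarith
  have hyB' : ∀ t, ¬ B t → y t ≤ y' t ∧ y' t ≤ y t + ε := fun t h => by
    by_cases h' : A t
    · rw [hyA t h']; constructor <;> linarith
    · rw [hyN t h' h]; constructor <;> linarith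
  have hcovL := fun k p i => covered_of_uncovered_left (y' := y') (p := p) (i := i)
    hy hε0 hεr hyA hyA' hAcl
    (fun s t h => g0 (s, t) (sub_pos.2 h)) (fun s t h => g1 (s, t) (sub_pos.2 h))
    (fun s t h => g2 (s, t) (sub_pos.2 h)) (hcov k) (hAne k)
    (fun t h => ga (k, t) (sub_pos.2 h)) (fun t h => ga' (k, t) (sub_pos.2 h))
  have hcovR := fun k p i => covered_of_uncovered_right (y' := y') (p := p) (i := i)
    hy hε0 hεr hyB hyB' hBcl
    (fun s t h => g0 (s, t) (sub_pos.2 h)) (fun s t h => g1 (s, t) (sub_pos.2 h))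
    (fun s t h => g2 (s, t) (sub_pos.2 h)) (hcov k) (hBne k)
    (fun t h => gb (k, t) (sub_pos.2 h)) (fun t h => gb' (k, t) (sub_pos.2 h))
  refine hmin (lamStar - ε) (by linarith) (by linarith) ⟨y', fun i => ?_, fun k p hp hp' => ?_⟩
  · have hdi := abs_le.1 (hd i)
    -- A sensor that is not left-tight has slack `4 * ε` on the left; likewise on the right.
    have hl : A i ∨ 4 * ε ≤ y i - (x i - lamStar) := by
      by_cases h : y i = x i - lamStar
      · exact Or.inl ⟨i, le_rfl, attached_refl r y i, h⟩
      · exact Or.inr (gL i (sub_pos.2 (lt_of_le_of_ne (by linarith) (Ne.symm h))))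
    have hr' : B i ∨ 4 * ε ≤ x i + lamStar - y i := by
      by_cases h : y i = x i + lamStar
      · exact Or.inl ⟨i, le_rfl, attached_refl r y i, h⟩
      · exact Or.inr (gR i (sub_pos.2 (lt_of_le_of_ne (by linarith) h)))
    rw [abs_le]
    rcases hl with h | h
    · have h2 := hr'.resolve_left (hdis i h)
      rw [hyA i h]
      constructor <;> linarith
    · rcases hr' with h' | h'
      · rw [hyB i h']
        constructor <;> linarith
      · by_cases hAi : A i
        · rw [hyA i hAi]
          constructor <;> linarith
        · have := hyA' i hAi
          constructor <;> linarith
  · obtain ⟨i, hi⟩ := hcov k p hp hp'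
    by_cases h1 : p < y' i - r
    · have hAi : A i := by
        by_contra h
        linarith [(hyA' i h).2, (abs_le.1 hi).1]
      exact hcovL k p i hp hp' hAi hi h1
    · by_cases h2 : y' i + r < p
      · have hBi : B i := by
          by_contra h
          linarith [(hyB' i h).1, (abs_le.1 hi).2]
        exact hcovR k p i hp hp' hBi hi h2
      · exact ⟨i, abs_le.2 ⟨by linarith, by linarith⟩⟩
end

section
/- Candidate-value set for the optimum (consequence of Lemma 2): let x_1 ≤ ⋯ ≤ x_n be sensor positions, r > 0, and [a_1,b_1],…,[a_m,b_m] the barriers (pairwise disjoint closed intervals with a_k < b_k). Suppose λ* > 0 is feasible and no λ with 0 ≤ λ < λ* is feasible. Then λ* belongs to the finite set Λ = Λ_1 ∪ Λ_2 ∪ Λ_3, where Λ_1 = { x_j − (a_k + 2r(j−i) + r) : 1 ≤ i ≤ j ≤ n, 1 ≤ k ≤ m }, Λ_2 = { b_k − r − 2r(j−i) − x_i : 1 ≤ i ≤ j ≤ n, 1 ≤ k ≤ m }, and Λ_3 = { (x_j − x_i − 2r(j−i))/2 : 1 ≤ i < j ≤ n }. -/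
/-!
A covering assignment may be sorted without increasing the largest displacement, because the `x i`
are sorted (`sorted_displacement`). For a sorted assignment `y`, coverage of a barrier `[a, b]` is
witnessed by difference constraints: some sensor `s` has `y s ≤ a + r`, some sensor `t ≥ s` has
`b - r ≤ y t`, and consecutive sensors from `s` to `t` are at most `2r` apart. Conversely such
constraints force coverage even for an unsorted assignment (`covers_of_chain`).

So keep every constraint of these three shapes that an optimal sorted `y` satisfies, and view the
bound `|z i - x i| ≤ lam` as a parameter. Such a system is solvable as soon as, along every chain
`i ≤ j` of short gaps, each lower bound at `j` is at most each upper bound at `i` plus `2r(j - i)`: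
the largest candidate, with `z j` the minimum of the upper bounds propagated to `j`, is a solution
(`exists_solution`). The comparisons involving `lam` become equalities exactly at the members of
`Λ₁`, `Λ₂`, `Λ₃`. If `lamStar` is in none of these sets, all of them are strict at `lamStar`, hence
persist for some slightly smaller `lam`, contradicting minimality.
-/

/-- A permutation of `Fin n` cannot map `{i' | i ≤ i'}` into `{l | i < l}`. -/
lemma exists_ge_perm_le {n : ℕ} (σ : Equiv.Perm (Fin n)) (i : Fin n) :
    ∃ i', i ≤ i' ∧ σ i' ≤ i := by
  by_contra! h
  have h1 : (Finset.Ici i).card ≤ (Finset.Ioi i).card :=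
    Finset.card_le_card_of_injOn σ (fun l hl => by simpa using h l (by simpa using hl))
      σ.injective.injOn
  simp only [Fin.card_Ici, Fin.card_Ioi] at h1
  have := i.2
  omega

/-- A permutation of `Fin n` cannot map `{i' | i' ≤ i}` into `{l | l < i}`. -/
lemma exists_le_perm_ge {n : ℕ} (σ : Equiv.Perm (Fin n)) (i : Fin n) :
    ∃ i', i' ≤ i ∧ i ≤ σ i' := by
  by_contra! h
  have h1 : (Finset.Iic i).card ≤ (Finset.Iio i).card :=
    Finset.card_le_card_of_injOn σ (fun l hl => by simpa using h l (by simpa using hl))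
      σ.injective.injOn
  simp only [Fin.card_Iic, Fin.card_Iio] at h1
  omega

/-- Sorting the targets does not increase the largest displacement from sorted positions. -/
lemma sorted_displacement {n : ℕ} {lam : ℝ} {x y : Fin n → ℝ} (hx : Monotone x)
    (hy : ∀ i, |y i - x i| ≤ lam) (σ : Equiv.Perm (Fin n)) (hσ : Monotone (y ∘ σ)) (i : Fin n) :
    |(y ∘ σ) i - x i| ≤ lam := by
  rw [abs_le]
  constructor
  · obtain ⟨l, hl, hl'⟩ := exists_le_perm_ge σ i
    have h1 : y (σ l) ≤ y (σ i) := hσ hl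
    have h2 := hx hl'
    have h3 := (abs_le.mp (hy (σ l))).1
    simp only [Function.comp]
    linarith
  · obtain ⟨l, hl, hl'⟩ := exists_ge_perm_le σ i
    have h1 : y (σ i) ≤ y (σ l) := hσ hl
    have h2 := hx hl'
    have h3 := (abs_le.mp (hy (σ l))).2
    simp only [Function.comp]
    linarith

/-- `Chain r y i j` says that `i ≤ j` and that `y` increases by at most `2r` at each step between
consecutive indices from `i` to `j`. -/
def Chain {n : ℕ} (r : ℝ) (y : Fin n → ℝ) (i j : Fin n) : Prop :=
  i ≤ j ∧ ∀ l l' : Fin n, i ≤ l → l' ≤ j → (l' : ℕ) = l + 1 → y l' ≤ y l + 2 * r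

lemma Chain.refl {n : ℕ} (r : ℝ) (y : Fin n → ℝ) (i : Fin n) : Chain r y i i :=
  ⟨le_rfl, fun l l' h1 h2 h3 => by simp only [Fin.le_def] at h1 h2; omega⟩

lemma Chain.step {n : ℕ} {r : ℝ} {y : Fin n → ℝ} {i j j' : Fin n} (h : Chain r y i j)
    (hj : (j' : ℕ) = j + 1) (hy : y j' ≤ y j + 2 * r) : Chain r y i j' := by
  refine ⟨?_, fun l l' h1 h2 h3 => ?_⟩
  · have := h.1
    simp only [Fin.le_def] at *
    omega
  · by_cases hl : l' = j'
    · have : l = j := by ext; omega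
      rw [hl, this]
      exact hy
    · refine h.2 l l' h1 ?_ h3
      have : (l' : ℕ) ≠ j' := fun e => hl (Fin.ext e)
      simp only [Fin.le_def] at *
      omega

/-- The natural-number subtraction is not truncated here, as `i ≤ j`. -/
lemma cast_sub_step {n : ℕ} {i j j' : Fin n} (hij : i ≤ j) (hj : (j' : ℕ) = j + 1) :
    ((((j' : ℕ) - (i : ℕ) : ℕ)) : ℝ) = ((((j : ℕ) - (i : ℕ) : ℕ)) : ℝ) + 1 := by
  have : (j' : ℕ) - (i : ℕ) = (j : ℕ) - (i : ℕ) + 1 := by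
    simp only [Fin.le_def] at hij
    omega
  rw [this]
  push_cast
  rfl

lemma Chain.le_add {n : ℕ} {r : ℝ} {y : Fin n → ℝ} {i : Fin n} :
    ∀ (d : ℕ) (j : Fin n), Chain r y i j → (j : ℕ) = i + d →
      y j ≤ y i + 2 * r * ((((j : ℕ) - (i : ℕ) : ℕ)) : ℝ) := by
  intro d
  induction d with
  | zero =>
    intro j _ hj
    have : j = i := by ext; omega
    subst this
    simp
  | succ d ih =>
    intro j h hj
    have hjn := j.2
    have hle : i ≤ (⟨i + d, by omega⟩ : Fin n) := by simp only [Fin.le_def]; omega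
    have h1 : Chain r y i ⟨i + d, by omega⟩ :=
      ⟨hle, fun l l' h1 h2 h3 => h.2 l l' h1
        (by simp only [Fin.le_def] at *; omega) h3⟩
    have h2 := ih _ h1 rfl
    have h3 := h.2 ⟨i + d, by omega⟩ j hle le_rfl (by simp only; omega)
    rw [cast_sub_step (j := ⟨i + d, by omega⟩) hle (by simp only; omega)]
    linarith

/-- A chain of sensors with gaps at most `2r`, starting no later than `a + r` and ending no earlier
than `b - r`, covers `[a, b]`; no monotonicity is needed. -/
lemma covers_of_chain {n : ℕ} {r : ℝ} {z : Fin n → ℝ} {s t : Fin n} {a b p : ℝ}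
    (h : Chain r z s t) (hs : z s ≤ a + r) (ht : b - r ≤ z t) (hap : a ≤ p) (hpb : p ≤ b) :
    ∃ i, |p - z i| ≤ r := by
  -- The first sensor from `s` on whose interval does not end before `p` covers `p`.
  obtain ⟨i, ⟨hsi, hi⟩, hmin⟩ := WellFounded.has_min (wellFounded_lt (α := Fin n))
    {i | s ≤ i ∧ p - r ≤ z i} ⟨t, h.1, by linarith⟩
  refine ⟨i, abs_le.mpr ⟨?_, by linarith⟩⟩
  rcases hsi.eq_or_lt with rfl | hlt
  · linarith
  · have hi2 := i.2
    have hlt' : (s : ℕ) < i := hlt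
    have hsl : s ≤ (⟨i - 1, by omega⟩ : Fin n) := by simp only [Fin.le_def]; omega
    have hit : i ≤ t := not_lt.mp fun hti => hmin t ⟨h.1, by linarith⟩ hti
    have h1 := h.2 ⟨i - 1, by omega⟩ i hsl hit (by simp only; omega)
    have h2 : z ⟨i - 1, by omega⟩ < p - r := by
      by_contra! h2
      exact hmin ⟨i - 1, by omega⟩ ⟨hsl, h2⟩ (by simp only [Fin.lt_def]; omega)
    linarith

/-- A sorted assignment covering `[a, b]` contains a chain as in `covers_of_chain`. -/
lemma exists_chain {n : ℕ} {r : ℝ} {y : Fin n → ℝ} (hy : Monotone y) {a b : ℝ} (hab : a ≤ b)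
    (hc : ∀ p : ℝ, a ≤ p → p ≤ b → ∃ i, |p - y i| ≤ r) :
    ∃ s t, Chain r y s t ∧ y s ≤ a + r ∧ b - r ≤ y t := by
  obtain ⟨s, hs⟩ := hc a le_rfl hab
  obtain ⟨t, ht⟩ := hc b hab le_rfl
  rw [abs_le] at hs ht
  rcases le_total s t with hst | hts
  · refine ⟨s, t, ⟨hst, fun l l' h1 h2 h3 => ?_⟩, by linarith, by linarith⟩
    -- The midpoint of a longer gap would be an uncovered point of `[a, b]`.
    by_contra! hgap
    have hl := hy h1
    have hl' := hy h2
    obtain ⟨i, hi⟩ := hc ((y l + y l') / 2) (by linarith) (by linarith)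
    rw [abs_le] at hi
    rcases le_or_gt i l with hil | hil
    · have := hy hil
      linarith
    · have : l' ≤ i := by simp only [Fin.le_def, Fin.lt_def] at *; omega
      have := hy this
      linarith
  · have := hy hts
    exact ⟨t, t, Chain.refl r y t, by linarith, by linarith⟩

/-- Upper bounds on `z j`, propagated along chains of `y` from the bounds `z i ≤ x i + lam` and
`z i ≤ a k + r`, the latter imposed when `y` satisfies it. -/
def upperBoundsAt {n m : ℕ} (r lam : ℝ) (x y : Fin n → ℝ) (a : Fin m → ℝ) (j : Fin n) : Set ℝ :=
  {v | ∃ i, Chain r y i j ∧ v = x i + lam + 2 * r * ((((j : ℕ) - (i : ℕ) : ℕ)) : ℝ)} ∪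
  {v | ∃ i k, Chain r y i j ∧ y i ≤ a k + r ∧
    v = a k + r + 2 * r * ((((j : ℕ) - (i : ℕ) : ℕ)) : ℝ)}

lemma upperBoundsAt_finite {n m : ℕ} (r lam : ℝ) (x y : Fin n → ℝ) (a : Fin m → ℝ) (j : Fin n) :
    (upperBoundsAt r lam x y a j).Finite := by
  refine Set.Finite.union ?_ ?_
  · refine (Set.finite_range fun i : Fin n =>
      x i + lam + 2 * r * ((((j : ℕ) - (i : ℕ) : ℕ)) : ℝ)).subset ?_
    rintro v ⟨i, -, rfl⟩
    exact ⟨i, rfl⟩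
  · refine (Set.finite_range fun q : Fin n × Fin m =>
      a q.2 + r + 2 * r * ((((j : ℕ) - (q.1 : ℕ) : ℕ)) : ℝ)).subset ?_
    rintro v ⟨i, k, -, -, rfl⟩
    exact ⟨(i, k), rfl⟩

/-- Solvability of the difference constraints read off from `y`: if all comparisons between a lower
bound at `j` and an upper bound propagated to `j` along a chain hold, then some `z` within `lam` of
`x` satisfies every constraint `z i ≤ a k + r`, `b k - r ≤ z i` and `z l' ≤ z l + 2r` that `y`
satisfies. -/
lemma exists_solution {n m : ℕ} {r lam : ℝ} {x y : Fin n → ℝ} {a b : Fin m → ℝ}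
    (h1 : ∀ i j k, Chain r y i j → y i ≤ a k + r →
      x j - lam ≤ a k + r + 2 * r * ((((j : ℕ) - (i : ℕ) : ℕ)) : ℝ))
    (h2 : ∀ i j k, Chain r y i j → b k - r ≤ y j →
      b k - r ≤ x i + lam + 2 * r * ((((j : ℕ) - (i : ℕ) : ℕ)) : ℝ))
    (h3 : ∀ i j, Chain r y i j →
      x j - lam ≤ x i + lam + 2 * r * ((((j : ℕ) - (i : ℕ) : ℕ)) : ℝ)) :
    ∃ z : Fin n → ℝ, (∀ i, |z i - x i| ≤ lam) ∧ (∀ i k, y i ≤ a k + r → z i ≤ a k + r) ∧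
      (∀ i k, b k - r ≤ y i → b k - r ≤ z i) ∧
      ∀ l l' : Fin n, (l' : ℕ) = l + 1 → y l' ≤ y l + 2 * r → z l' ≤ z l + 2 * r := by
  set S := upperBoundsAt r lam x y a with hS
  have hfin : ∀ j, (S j).Finite := upperBoundsAt_finite r lam x y a
  have hself : ∀ j, x j + lam ∈ S j := fun j => Or.inl ⟨j, Chain.refl r y j, by simp⟩
  have hmem : ∀ j, sInf (S j) ∈ S j := fun j => Set.Nonempty.csInf_mem ⟨_, hself j⟩ (hfin j)
  have hle : ∀ j v, v ∈ S j → sInf (S j) ≤ v := fun j v hv => csInf_le (hfin j).bddBelow hv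
  refine ⟨fun j => sInf (S j), fun j => ?_, fun j k hk => ?_, fun j k hk => ?_,
    fun l l' hl hy => ?_⟩
  · have hub := hle j _ (hself j)
    rw [abs_le]
    refine ⟨?_, by linarith⟩
    rcases hmem j with ⟨i, hc, hv⟩ | ⟨i, k, hc, hk, hv⟩
    · have := h3 i j hc
      linarith
    · have := h1 i j k hc hk
      linarith
  · exact hle j _ (Or.inr ⟨j, k, Chain.refl r y j, hk, by simp⟩)
  · rcases hmem j with ⟨i, hc, hv⟩ | ⟨i, k', hc, hk', hv⟩
    · have := h2 i j k hc hk
      simp only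
      linarith
    · -- Neither bound depends on `lam`, and `y` itself satisfies both.
      have := hc.le_add ((j : ℕ) - i) j (by have := hc.1; simp only [Fin.le_def] at this; omega)
      simp only
      linarith
  · refine hle l' (sInf (S l) + 2 * r) ?_
    rcases hmem l with ⟨i, hc, hv⟩ | ⟨i, k, hc, hk, hv⟩
    · exact Or.inl ⟨i, hc.step hl hy, by rw [cast_sub_step hc.1 hl]; linarith⟩
    · exact Or.inr ⟨i, k, hc.step hl hy, hk, by rw [cast_sub_step hc.1 hl]; linarith⟩


/-- Candidate-value set for the optimum (consequence of Lemma 2). -/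
theorem optimum_in_candidate_set (n m : ℕ) (r lamStar : ℝ) (hr : 0 < r)
    (hpos : 0 < lamStar)
    (x : Fin n → ℝ) (hx : Monotone x)
    (a b : Fin m → ℝ) (hab : ∀ k, a k < b k)
    (hdisj : ∀ k l : Fin m, k ≠ l → Disjoint (Set.Icc (a k) (b k)) (Set.Icc (a l) (b l)))
    (hfeas : ∃ y : Fin n → ℝ, (∀ i, |y i - x i| ≤ lamStar) ∧
      ∀ k : Fin m, ∀ p : ℝ, a k ≤ p → p ≤ b k → ∃ i, |p - y i| ≤ r)
    (hmin : ∀ lam : ℝ, 0 ≤ lam → lam < lamStar →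
      ¬ ∃ y : Fin n → ℝ, (∀ i, |y i - x i| ≤ lam) ∧
        ∀ k : Fin m, ∀ p : ℝ, a k ≤ p → p ≤ b k → ∃ i, |p - y i| ≤ r) :
    (∃ i j : Fin n, ∃ k : Fin m, i ≤ j ∧
        lamStar = x j - (a k + 2 * r * ((((j : ℕ) - (i : ℕ) : ℕ)) : ℝ) + r)) ∨
    (∃ i j : Fin n, ∃ k : Fin m, i ≤ j ∧
        lamStar = b k - r - 2 * r * ((((j : ℕ) - (i : ℕ) : ℕ)) : ℝ) - x i) ∨
    (∃ i j : Fin n, i < j ∧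
        lamStar = (x j - x i - 2 * r * ((((j : ℕ) - (i : ℕ) : ℕ)) : ℝ)) / 2) := by
  by_contra! hno
  obtain ⟨n1, n2, n3⟩ := hno
  obtain ⟨y₀, hy₀, hcov₀⟩ := hfeas
  obtain ⟨y, hmono, hyx, hcov⟩ : ∃ y : Fin n → ℝ, Monotone y ∧ (∀ i, |y i - x i| ≤ lamStar) ∧
      ∀ k : Fin m, ∀ p : ℝ, a k ≤ p → p ≤ b k → ∃ i, |p - y i| ≤ r := by
    refine ⟨y₀ ∘ Tuple.sort y₀, Tuple.monotone_sort y₀,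
      sorted_displacement hx hy₀ _ (Tuple.monotone_sort y₀), fun k p h1 h2 => ?_⟩
    obtain ⟨i, hi⟩ := hcov₀ k p h1 h2
    exact ⟨(Tuple.sort y₀).symm i, by simpa using hi⟩
  have hadd : ∀ i j, Chain r y i j →
      y j ≤ y i + 2 * r * ((((j : ℕ) - (i : ℕ) : ℕ)) : ℝ) := fun i j hc =>
    hc.le_add ((j : ℕ) - i) j (by have := hc.1; simp only [Fin.le_def] at this; omega)
  -- At `lamStar` all comparisons involving the parameter are strict.
  have s1 : ∀ i j k, Chain r y i j → y i ≤ a k + r →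
      x j - lamStar < a k + r + 2 * r * ((((j : ℕ) - (i : ℕ) : ℕ)) : ℝ) := by
    intro i j k hc hk
    have := hadd i j hc
    have hj := (abs_le.mp (hyx j)).1
    refine lt_of_le_of_ne (by linarith) fun e => n1 i j k hc.1 (by linarith)
  have s2 : ∀ i j k, Chain r y i j → b k - r ≤ y j →
      b k - r < x i + lamStar + 2 * r * ((((j : ℕ) - (i : ℕ) : ℕ)) : ℝ) := by
    intro i j k hc hk
    have := hadd i j hc
    have hi := (abs_le.mp (hyx i)).2
    refine lt_of_le_of_ne (by linarith) fun e => n2 i j k hc.1 (by linarith)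
  have s3 : ∀ i j, Chain r y i j →
      x j - lamStar < x i + lamStar + 2 * r * ((((j : ℕ) - (i : ℕ) : ℕ)) : ℝ) := by
    intro i j hc
    rcases hc.1.eq_or_lt with rfl | hlt
    · simp only [Nat.sub_self, Nat.cast_zero]
      linarith
    · have := hadd i j hc
      have hi := (abs_le.mp (hyx i)).2
      have hj := (abs_le.mp (hyx j)).1
      refine lt_of_le_of_ne (by linarith) fun e => n3 i j hlt (by linarith)
  -- Finitely many strict inequalities, continuous in the parameter, survive a small decrease.
  have ev : ∀ c d : ℝ, ∀ P : Prop, (P → c < d + lamStar) →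
      ∀ᶠ lam in nhdsWithin lamStar (Set.Iio lamStar), P → c ≤ d + lam := by
    intro c d P hP
    by_cases hp : P
    · have hlt : c - d < lamStar := by linarith [hP hp]
      filter_upwards [mem_nhdsWithin_of_mem_nhds (lt_mem_nhds hlt)] with lam hlam _
      linarith
    · exact Filter.Eventually.of_forall fun _ h => absurd h hp
  have e1 := Filter.eventually_all.mpr fun i : Fin n => Filter.eventually_all.mpr fun j : Fin n =>
    Filter.eventually_all.mpr fun k : Fin m => ev (x j)
      (a k + r + 2 * r * ((((j : ℕ) - (i : ℕ) : ℕ)) : ℝ)) (Chain r y i j ∧ y i ≤ a k + r)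
      fun h => by linarith [s1 i j k h.1 h.2]
  have e2 := Filter.eventually_all.mpr fun i : Fin n => Filter.eventually_all.mpr fun j : Fin n =>
    Filter.eventually_all.mpr fun k : Fin m => ev (b k - r)
      (x i + 2 * r * ((((j : ℕ) - (i : ℕ) : ℕ)) : ℝ)) (Chain r y i j ∧ b k - r ≤ y j)
      fun h => by linarith [s2 i j k h.1 h.2]
  have e3 := Filter.eventually_all.mpr fun i : Fin n => Filter.eventually_all.mpr fun j : Fin n =>
    ev (x j / 2) ((x i + 2 * r * ((((j : ℕ) - (i : ℕ) : ℕ)) : ℝ)) / 2) (Chain r y i j)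
      fun h => by linarith [s3 i j h]
  have e0 : ∀ᶠ lam in nhdsWithin lamStar (Set.Iio lamStar), 0 < lam :=
    mem_nhdsWithin_of_mem_nhds (lt_mem_nhds hpos)
  obtain ⟨lam, h0, h1, h2, h3, hlt⟩ :=
    (e0.and (e1.and (e2.and (e3.and self_mem_nhdsWithin)))).exists
  obtain ⟨z, hzx, hza, hzb, hzs⟩ := exists_solution (r := r) (lam := lam) (x := x) (y := y)
    (a := a) (b := b)
    (fun i j k hc hk => by linarith [h1 i j k ⟨hc, hk⟩])
    (fun i j k hc hk => by linarith [h2 i j k ⟨hc, hk⟩])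
    (fun i j hc => by linarith [h3 i j hc])
  refine hmin lam h0.le hlt ⟨z, hzx, fun k p hap hpb => ?_⟩
  obtain ⟨s, t, hst, hs, ht⟩ := exists_chain hmono (hab k).le (hcov k)
  exact covers_of_chain (r := r) ⟨hst.1, fun l l' hl hl' he => hzs l l' he (hst.2 l l' hl hl' he)⟩
    (hza s k hs) (hzb t k ht) hap hpb
end

section
/- Uniqueness of the intersection of two right-extension curves: let x_1, y_1, x_2, y_2 be real numbers such that it is not the case that both x_1 = x_2 and y_1^2 = y_2^2. Then there is at most one real number λ with λ ≥ |y_1| and λ ≥ |y_2| satisfying x_1 + √(λ^2 − y_1^2) = x_2 + √(λ^2 − y_2^2); that is, the set {λ ∈ ℝ : λ ≥ max(|y_1|, |y_2|) and x_1 + √(λ^2 − y_1^2) = x_2 + √(λ^2 − y_2^2)} is a subsingleton. -/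
/-!
Write `a = √(l² - y1²)` and `b = √(l² - y2²)`. At an intersection `b - a = x1 - x2`, while
`b² - a² = y1² - y2²` does not depend on `l`. If `x1 = x2`, then `a = b`, so `y1² = y2²`, which is
excluded. Otherwise dividing by `b - a ≠ 0` determines `b + a`, hence `a`, hence `l² = a² + y1²`,
and finally `l`, since `l ≥ |y1| ≥ 0`.
-/

/-- Uniqueness of the intersection of two right-extension curves. -/
theorem reach_curves_intersect_once (x1 y1 x2 y2 : ℝ)
    (h : ¬ (x1 = x2 ∧ y1 ^ 2 = y2 ^ 2)) :
    Set.Subsingleton {l : ℝ | max |y1| |y2| ≤ l ∧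
      x1 + Real.sqrt (l ^ 2 - y1 ^ 2) = x2 + Real.sqrt (l ^ 2 - y2 ^ 2)} := by
  have sq_sqrt_of_reach : ∀ {y l : ℝ}, |y| ≤ l → Real.sqrt (l ^ 2 - y ^ 2) ^ 2 = l ^ 2 - y ^ 2 :=
    fun hy => Real.sq_sqrt (sub_nonneg.2 (sq_le_sq.2 (hy.trans (le_abs_self _))))
  rintro l ⟨hl, el⟩ m ⟨hm, em⟩
  obtain ⟨hl1, hl2⟩ := max_le_iff.1 hl
  obtain ⟨hm1, hm2⟩ := max_le_iff.1 hm
  have l0 : 0 ≤ l := (abs_nonneg y1).trans hl1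
  have m0 : 0 ≤ m := (abs_nonneg y1).trans hm1
  have ha := sq_sqrt_of_reach hl1
  have hb := sq_sqrt_of_reach hl2
  have hc := sq_sqrt_of_reach hm1
  have hd := sq_sqrt_of_reach hm2
  generalize Real.sqrt (l ^ 2 - y1 ^ 2) = a at *
  generalize Real.sqrt (l ^ 2 - y2 ^ 2) = b at *
  generalize Real.sqrt (m ^ 2 - y1 ^ 2) = c at *
  generalize Real.sqrt (m ^ 2 - y2 ^ 2) = d at *
  obtain rfl : b = x1 - x2 + a := by linarith
  obtain rfl : d = x1 - x2 + c := by linarith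
  have hx : x1 - x2 ≠ 0 := by
    intro hx
    rw [hx, zero_add] at hb
    exact h ⟨sub_eq_zero.1 hx, by linarith⟩
  have hac : a = c := mul_left_cancel₀ hx (by linarith)
  subst hac
  exact (sq_eq_sq₀ l0 m0).1 (by linarith)
end
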